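/- arXiv:2003.03656 — 2 statements merged into one kernel-verified Lean document; each statement's English description precedes it below -/
import Mathlib

section
/- For every finite field F and every finite subset P ⊆ F² with T(P) ≥ |P|/2, one has a(P) ≥ |P|^{3/2} / (2√2 · T(P)^{1/2}). -/
open Finset MeasureTheory
open scoped NNReal ENNReal

/-- A set `P` in the affine plane over `F` is an arc if it contains no three
distinct collinear points. -/
def IsArc (F : Type*) [Field F] (P : Set (F × F)) : Prop :=
  ∀ a ∈ P, ∀ b ∈ P, ∀ c ∈ P,
    a ≠ b → a ≠ c → b ≠ c → ¬ Collinear F ({a, b, c} : Set (F × F))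

/-- `numArcs F k` is the number of `k`-element arcs in `F²`. -/
noncomputable def numArcs (F : Type*) [Field F] [Fintype F] (k : ℕ) : ℕ :=
  Nat.card {s : Finset (F × F) // s.card = k ∧ IsArc F ↑s}

/-- `maxArc F P` is the maximum cardinality of an arc contained in `P`. -/
noncomputable def maxArc (F : Type*) [Field F] (P : Finset (F × F)) : ℕ :=
  sSup {k : ℕ | ∃ s : Finset (F × F), s ⊆ P ∧ s.card = k ∧ IsArc F ↑s}

/-- `numCollinearTriples F P` is the number of 3-element collinear subsets of `P`. -/
noncomputable def numCollinearTriples (F : Type*) [Field F] (P : Finset (F × F)) : ℕ :=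
  Nat.card {s : Finset (F × F) // s ⊆ P ∧ s.card = 3 ∧ Collinear F (↑s : Set (F × F))}

/-- `P` contains no `l` distinct collinear points. -/
def NoLCollinear (F : Type*) [Field F] (l : ℕ) (P : Finset (F × F)) : Prop :=
  ∀ s : Finset (F × F), s ⊆ P → s.card = l → ¬ Collinear F (↑s : Set (F × F))

/-- The product Bernoulli(p) measure on subsets of `F²` (encoded as functions
`F × F → Bool`): each point is included independently with probability `p`. -/
noncomputable def randomMeasure (F : Type*) [Field F] [Fintype F] (p : ℝ≥0) (hp : p ≤ 1) :
    Measure ((F × F) → Bool) :=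
  Measure.pi fun _ => (PMF.bernoulli p (by exact_mod_cast hp)).toMeasure

/-- The subset of `F²` corresponding to an indicator function `Q : F × F → Bool`. -/
noncomputable def toSubset {F : Type*} [Field F] [Fintype F] (Q : (F × F) → Bool) :
    Finset (F × F) := Finset.univ.filter fun x => Q x = true

/-- `L` is an affine line in `F²`, i.e. the affine span of two distinct points. -/
def IsAffineLine (F : Type*) [Field F] (L : Set (F × F)) : Prop :=
  ∃ a b : F × F, a ≠ b ∧ L = (affineSpan F {a, b} : Set (F × F))

/-!
This is the deletion method. Keep each of the `n` points of `P` independently with probability `p`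
and then remove one point from each of the `T` collinear triples that survives. What is left is an
arc, of expected size at least `p * n - p ^ 3 * T`. Taking `p ^ 2 = n / (2 * T)`, which is at most
`1` as long as `n / 2 ≤ T`, makes the loss half of the gain and leaves `p * n / 2`.
-/

section RandomSubset

variable {α R : Type*} [CommRing R]

/-- The probability that the random subset of `P`, containing each point of `P` independently with
probability `p`, equals `S`. It is meant for `S ⊆ P` only, where the subtraction of cardinalities
is not truncated. -/
def bernoulliWeight (P : Finset α) (p : R) (S : Finset α) : R :=
  p ^ #S * (1 - p) ^ (#P - #S)

lemma bernoulliWeight_nonneg [PartialOrder R] [IsOrderedRing R] {p : R} (hp₀ : 0 ≤ p) (hp₁ : p ≤ 1)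
    (P S : Finset α) : 0 ≤ bernoulliWeight P p S :=
  mul_nonneg (pow_nonneg hp₀ _) (pow_nonneg (sub_nonneg.2 hp₁) _)

lemma sum_bernoulliWeight (P : Finset α) (p : R) :
    ∑ S ∈ P.powerset, bernoulliWeight P p S = 1 := by
  simp only [bernoulliWeight, sum_pow_mul_eq_add_pow, add_sub_cancel, one_pow]

lemma bernoulliWeight_union [DecidableEq α] {P A B : Finset α} (hA : A ⊆ P)
    (hAB : Disjoint A B) (p : R) :
    bernoulliWeight P p (A ∪ B) = p ^ #A * bernoulliWeight (P \ A) p B := by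
  rw [bernoulliWeight, bernoulliWeight, card_union_of_disjoint hAB, card_sdiff_of_subset hA,
    Nat.sub_add_eq, pow_add, mul_assoc]

lemma sum_bernoulliWeight_filter_superset [DecidableEq α] {P A : Finset α}
    (hA : A ⊆ P) (p : R) :
    ∑ S ∈ P.powerset with A ⊆ S, bernoulliWeight P p S = p ^ #A := by
  have hdisj : ∀ B ∈ (P \ A).powerset, Disjoint A B := fun B hB ↦
    disjoint_sdiff.mono_right (mem_powerset.1 hB)
  have hinj : Set.InjOn (A ∪ ·) ((P \ A).powerset : Set (Finset α)) := fun B hB C hC h ↦ by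
    simpa only [union_sdiff_cancel_left (hdisj B hB), union_sdiff_cancel_left (hdisj C hC)]
      using congrArg (· \ A) h
  calc ∑ S ∈ P.powerset with A ⊆ S, bernoulliWeight P p S
      = ∑ B ∈ (P \ A).powerset, bernoulliWeight P p (A ∪ B) := by
        rw [← Icc_eq_filter_powerset, Icc_eq_image_powerset hA, sum_image hinj]
    _ = ∑ B ∈ (P \ A).powerset, p ^ #A * bernoulliWeight (P \ A) p B :=
        sum_congr rfl fun B hB ↦ bernoulliWeight_union hA (hdisj B hB) p
    _ = p ^ #A := by rw [← mul_sum, sum_bernoulliWeight, mul_one]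

lemma sum_bernoulliWeight_mul_card_filter_subset [DecidableEq α] {P : Finset α}
    {H : Finset (Finset α)} (hH : H ⊆ P.powerset) (p : R) :
    ∑ S ∈ P.powerset, bernoulliWeight P p S * #{t ∈ H | t ⊆ S} = ∑ t ∈ H, p ^ #t := by
  calc ∑ S ∈ P.powerset, bernoulliWeight P p S * #{t ∈ H | t ⊆ S}
      = ∑ S ∈ P.powerset, ∑ t ∈ H, if t ⊆ S then bernoulliWeight P p S else 0 := by
        simp only [card_filter, Nat.cast_sum, Nat.cast_ite, Nat.cast_one, Nat.cast_zero, mul_sum,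
          mul_ite, mul_one, mul_zero]
    _ = ∑ t ∈ H, ∑ S ∈ P.powerset with t ⊆ S, bernoulliWeight P p S := by
        simp only [sum_comm (s := P.powerset), sum_filter]
    _ = ∑ t ∈ H, p ^ #t :=
        sum_congr rfl fun t ht ↦ sum_bernoulliWeight_filter_superset (mem_powerset.1 (hH ht)) p

lemma sum_bernoulliWeight_mul_card (P : Finset α) (p : R) :
    ∑ S ∈ P.powerset, bernoulliWeight P p S * #S = p * #P := by
  classical
  have hcard : ∀ S ∈ P.powerset, #{t ∈ P.powersetCard 1 | t ⊆ S} = #S := fun S hS ↦ by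
    have hfilter : {t ∈ P.powersetCard 1 | t ⊆ S} = S.powersetCard 1 := by
      ext t
      have := mem_powerset.1 hS
      grind
    rw [hfilter, card_powersetCard, Nat.choose_one_right]
  calc ∑ S ∈ P.powerset, bernoulliWeight P p S * #S
      = ∑ S ∈ P.powerset, bernoulliWeight P p S * #{t ∈ P.powersetCard 1 | t ⊆ S} :=
        sum_congr rfl fun S hS ↦ by rw [hcard S hS]
    _ = ∑ t ∈ P.powersetCard 1, p ^ #t :=
        sum_bernoulliWeight_mul_card_filter_subset
          (fun _ ht ↦ mem_powerset.2 (mem_powersetCard.1 ht).1) p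
    _ = p * #P := by
        rw [sum_powersetCard, Nat.choose_one_right, nsmul_eq_mul, pow_one, mul_comm]

end RandomSubset

section Deletion

variable {α 𝕜 : Type*} [Field 𝕜] [LinearOrder 𝕜] [IsStrictOrderedRing 𝕜]

lemma exists_le_card_sub_card_filter_subset [DecidableEq α] {P : Finset α}
    {H : Finset (Finset α)} (hH : H ⊆ P.powerset) {p : 𝕜} (hp₀ : 0 ≤ p) (hp₁ : p ≤ 1) :
    ∃ S ⊆ P, p * #P - ∑ t ∈ H, p ^ #t ≤ #S - #{t ∈ H | t ⊆ S} := by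
  have hsum := sum_bernoulliWeight P p
  -- The expectation is a center of mass of the values, and some value is at least as large.
  obtain ⟨S, hS, hle⟩ := (convexOn_id convex_univ).exists_ge_of_centerMass
    (t := P.powerset) (w := bernoulliWeight P p) (p := fun S ↦ (#S - #{t ∈ H | t ⊆ S} : 𝕜))
    (fun S _ ↦ bernoulliWeight_nonneg hp₀ hp₁ P S) (hsum ▸ zero_lt_one) (fun _ _ ↦ Set.mem_univ _)
  refine ⟨S, mem_powerset.1 hS, ?_⟩
  simpa only [id_eq, centerMass_eq_of_sum_1 _ _ hsum, smul_eq_mul, mul_sub, sum_sub_distrib,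
    sum_bernoulliWeight_mul_card, sum_bernoulliWeight_mul_card_filter_subset hH] using hle

lemma exists_hittingSet_card_le {G : Finset (Finset α)} (hG : ∅ ∉ G) :
    ∃ D : Finset α, #D ≤ #G ∧ ∀ t ∈ G, ¬Disjoint t D := by
  classical
  have hne : ∀ t : G, (t : Finset α).Nonempty := fun t ↦
    nonempty_iff_ne_empty.2 (ne_of_mem_of_not_mem t.2 hG)
  choose f hf using hne
  refine ⟨G.attach.image f, card_image_le.trans_eq card_attach, fun t ht ↦ ?_⟩
  exact not_disjoint_iff.2 ⟨f ⟨t, ht⟩, hf _, mem_image_of_mem f (mem_attach G _)⟩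

lemma exists_independent_card_le_add [DecidableEq α] {H : Finset (Finset α)} (hH : ∅ ∉ H)
    (S : Finset α) :
    ∃ I ⊆ S, (∀ t ∈ H, ¬t ⊆ I) ∧ #S ≤ #I + #{t ∈ H | t ⊆ S} := by
  obtain ⟨D, hDcard, hD⟩ := exists_hittingSet_card_le (G := {t ∈ H | t ⊆ S})
    fun h ↦ hH (mem_filter.1 h).1
  refine ⟨S \ D, sdiff_subset, fun t ht htS ↦ ?_, ?_⟩
  · exact hD t (mem_filter.2 ⟨ht, htS.trans sdiff_subset⟩) (disjoint_sdiff_self_left.mono_left htS)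
  · have := le_card_sdiff D S
    lia

theorem exists_independent_mul_card_sub_sum_le {P : Finset α} {H : Finset (Finset α)}
    (hH : H ⊆ P.powerset) (hempty : ∅ ∉ H) {p : 𝕜} (hp₀ : 0 ≤ p) (hp₁ : p ≤ 1) :
    ∃ I ⊆ P, (∀ t ∈ H, ¬t ⊆ I) ∧ p * #P - ∑ t ∈ H, p ^ #t ≤ #I := by
  classical
  obtain ⟨S, hSP, hS⟩ := exists_le_card_sub_card_filter_subset hH hp₀ hp₁
  obtain ⟨I, hIS, hI, hcard⟩ := exists_independent_card_le_add hempty S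
  have hcard' : (#S : 𝕜) ≤ #I + #{t ∈ H | t ⊆ S} := mod_cast hcard
  exact ⟨I, hIS.trans hSP, hI, by linarith⟩

end Deletion

section Arc

variable {F : Type*} [Field F]

lemma IsArc.card_le_maxArc {P I : Finset (F × F)} (hIP : I ⊆ P) (hI : IsArc F (I : Set (F × F))) :
    #I ≤ maxArc F P := by
  refine le_csSup ⟨#P, ?_⟩ ⟨I, hIP, rfl, hI⟩
  rintro _ ⟨s, hs, rfl, -⟩
  exact card_le_card hs

open scoped Classical in
/-- The set of collinear triples of `P`, whose number is `numCollinearTriples F P`. Its independent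
sets, as a `3`-uniform hypergraph on `P`, are the arcs in `P`. -/
noncomputable def collinearTriples (P : Finset (F × F)) : Finset (Finset (F × F)) :=
  {t ∈ P.powersetCard 3 | Collinear F (t : Set (F × F))}

lemma mem_collinearTriples {P t : Finset (F × F)} :
    t ∈ collinearTriples P ↔ t ⊆ P ∧ #t = 3 ∧ Collinear F (t : Set (F × F)) := by
  simp only [collinearTriples, mem_filter, mem_powersetCard, and_assoc]

lemma numCollinearTriples_eq_card (P : Finset (F × F)) :
    numCollinearTriples F P = #(collinearTriples P) :=
  Nat.subtype_card _ fun _ ↦ mem_collinearTriples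

lemma isArc_of_forall_collinearTriples_not_subset {P I : Finset (F × F)} (hIP : I ⊆ P)
    (hI : ∀ t ∈ collinearTriples P, ¬t ⊆ I) : IsArc F (I : Set (F × F)) := by
  classical
  intro a ha b hb c hc hab hac hbc hcol
  have hsub : {a, b, c} ⊆ I := by
    simp only [insert_subset_iff, singleton_subset_iff]
    exact ⟨ha, hb, hc⟩
  refine hI {a, b, c} (mem_collinearTriples.2 ⟨hsub.trans hIP, ?_, ?_⟩) hsub
  · exact card_eq_three.2 ⟨a, b, c, hab, hac, hbc, rfl⟩
  · simpa only [coe_insert, coe_singleton] using hcol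

theorem mul_card_sub_pow_mul_numCollinearTriples_le_maxArc (P : Finset (F × F)) {p : ℝ}
    (hp₀ : 0 ≤ p) (hp₁ : p ≤ 1) :
    p * #P - p ^ 3 * numCollinearTriples F P ≤ maxArc F P := by
  classical
  have hsub : collinearTriples P ⊆ P.powerset := fun t ht ↦
    mem_powerset.2 (mem_collinearTriples.1 ht).1
  have hcard : ∀ t ∈ collinearTriples P, #t = 3 := fun t ht ↦ (mem_collinearTriples.1 ht).2.1
  obtain ⟨I, hIP, hI, hle⟩ := exists_independent_mul_card_sub_sum_le hsub
    (fun h ↦ by simpa using hcard ∅ h) hp₀ hp₁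
  have harc := isArc_of_forall_collinearTriples_not_subset hIP hI
  calc p * #P - p ^ 3 * numCollinearTriples F P
      = p * #P - ∑ t ∈ collinearTriples P, p ^ #t := by
        rw [sum_congr rfl fun t ht ↦ congrArg (p ^ ·) (hcard t ht), sum_const, nsmul_eq_mul,
          numCollinearTriples_eq_card, mul_comm (p ^ 3)]
    _ ≤ #I := hle
    _ ≤ maxArc F P := mod_cast harc.card_le_maxArc hIP

end Arc

lemma exists_mul_sub_pow_three_mul_eq {n T : ℝ} (hn : 0 ≤ n) (h : n / 2 ≤ T) :
    ∃ p : ℝ, 0 ≤ p ∧ p ≤ 1 ∧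
      p * n - p ^ 3 * T = n ^ ((3 : ℝ) / 2) / (2 * √2 * √T) := by
  have hT₀ : 0 ≤ T := by linarith
  obtain rfl | hT := hT₀.eq_or_lt
  · obtain rfl : n = 0 := by linarith
    exact ⟨0, by simp⟩
  have hp₁ : √(n / (2 * T)) ≤ 1 := by
    rw [Real.sqrt_le_one, div_le_one (by positivity)]
    linarith
  refine ⟨√(n / (2 * T)), Real.sqrt_nonneg _, hp₁, ?_⟩
  have hbalance : √(n / (2 * T)) ^ 2 * T = n / 2 := by
    rw [Real.sq_sqrt (by positivity)]
    field_simp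
  have hpow : n ^ ((3 : ℝ) / 2) = √n * n := by
    rw [Real.rpow_div_two_eq_sqrt 3 hn, Real.rpow_ofNat, pow_succ', Real.sq_sqrt hn]
  calc √(n / (2 * T)) * n - √(n / (2 * T)) ^ 3 * T
      = √(n / (2 * T)) * n / 2 := by linear_combination (-√(n / (2 * T))) * hbalance
    _ = √n / (√2 * √T) * n / 2 := by rw [Real.sqrt_div hn, Real.sqrt_mul zero_le_two]
    _ = n ^ ((3 : ℝ) / 2) / (2 * √2 * √T) := by rw [hpow]; ring

theorem arc_from_few_triples (F : Type) [Field F] (P : Finset (F × F))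
    (h : (P.card : ℝ) / 2 ≤ (numCollinearTriples F P : ℝ)) :
    (P.card : ℝ) ^ ((3 : ℝ) / 2) /
        (2 * Real.sqrt 2 * Real.sqrt (numCollinearTriples F P)) ≤
      (maxArc F P : ℝ) := by
  obtain ⟨p, hp₀, hp₁, hp⟩ := exists_mul_sub_pow_three_mul_eq P.card.cast_nonneg h
  exact hp ▸ mul_card_sub_pow_mul_numCollinearTriples_le_maxArc P hp₀ hp₁
end

section
/- For every δ > 0 there exist constants c, C > 0 and q₀ such that for every prime power q ≥ q₀ there exists a set P ⊆ F² with |P| ≥ c · q^{2/3} satisfying: (i) P contains no four distinct collinear points; (ii) a(P) ≤ |P|^{3/4 + δ}; (iii) T(P) ≤ C · |P|^{3/2}. -/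
/-!
Write `q` for the order of the field. In a random set of points of the plane, each taken with
probability `p = q ^ (-4/3) / 2`, there are about `q ^ (2/3) / 2` points, the at most `q ^ 6`
collinear quadruples contribute at most `q ^ (2/3) / 16` in expectation, and the at most `q ^ 5`
collinear triples contribute `O(q)`. Deleting a point from every quadruple therefore leaves a set
satisfying everything but the bound on arcs, and the latter holds as soon as the expected number of
arcs of size `m = O(√q log q)` is below `q ^ (-2)`.

To count arcs, fix a subset `S` of size `s ≈ 2 √q log q` of an arc `A`. No two points of `A \ S`
lie on a common line through a point of `S`, so `A \ S` is independent in the graph joining two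
points that see some `a ∈ S` in the same direction. There are only `q + 1` directions, so by
Cauchy–Schwarz the lines through each `a ∈ S` catch many pairs inside any set of at least
`2 (q + 1)` points; as `S` is an arc, no pair is caught more than twice. Every such set thus
contains a vertex adjacent to a proportion `s / (4 (q + 1))` of it, and the Kleitman–Winston
algorithm shows that there are at most `(q ^ 2 + 1) ^ s (2 (q + 1)) ^ k` independent sets of
size `k`. For `k = 48 s` the factor `(2 (q + 1) p) ^ k` beats all the others.
-/

open Finset MeasureTheory
open scoped NNReal ENNReal

section RandomSubsets

variable {V : Type*}

/-- The left-hand side is multilinear in independent inclusion probabilities, all equal to `p`; they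
are rounded to `0` or `1` one after the other, each time without decreasing the value. -/
lemma exists_subset_sum_powerset_ge {p : ℝ} (hp₀ : 0 ≤ p) (hp₁ : p ≤ 1) (U : Finset V)
    (c : Finset V → ℝ) :
    ∃ P ⊆ U, ∑ B ∈ U.powerset, c B * p ^ #B ≤ ∑ B ∈ P.powerset, c B := by
  classical
  induction U using Finset.induction_on generalizing c with
  | empty => exact ⟨∅, subset_rfl, by simp⟩
  | insert a U ha ih =>
    obtain ⟨P, hPU, hP⟩ := ih c
    obtain ⟨Q, hQU, hQ⟩ := ih fun B => c B + c (insert a B)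
    have haQ : a ∉ Q := fun h => ha (hQU h)
    have conditioning : ∑ B ∈ (insert a U).powerset, c B * p ^ #B =
        (1 - p) * ∑ B ∈ U.powerset, c B * p ^ #B +
          p * ∑ B ∈ U.powerset, (c B + c (insert a B)) * p ^ #B := by
      rw [sum_powerset_insert ha, mul_sum, mul_sum, ← sum_add_distrib, ← sum_add_distrib]
      refine sum_congr rfl fun B hB => ?_
      rw [card_insert_of_notMem fun h => ha (mem_powerset.1 hB h)]
      ring
    rw [sum_add_distrib, ← sum_powerset_insert haQ] at hQ
    rw [conditioning]
    rcases le_total (∑ B ∈ P.powerset, c B) (∑ B ∈ (insert a Q).powerset, c B) with h | h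
    · exact ⟨insert a Q, insert_subset_insert a hQU, by nlinarith⟩
    · exact ⟨P, hPU.trans (subset_insert a U), by nlinarith⟩

variable [DecidableEq V]

lemma exists_sum_mul_card_filter_subset_ge {ι : Type*} [Fintype ι] {p : ℝ} (hp₀ : 0 ≤ p)
    (hp₁ : p ≤ 1) (α : ι → ℝ) (𝓑 : ι → Finset (Finset V)) :
    ∃ P : Finset V,
      ∑ i, α i * ∑ B ∈ 𝓑 i, p ^ #B ≤ ∑ i, α i * (#{B ∈ 𝓑 i | B ⊆ P} : ℝ) := by
  set U := univ.sup fun i => (𝓑 i).sup id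
  have hsub : ∀ i, 𝓑 i ⊆ U.powerset := fun i B hB => mem_powerset.2 <|
    (le_sup (f := id) hB).trans (le_sup (f := fun i => (𝓑 i).sup id) (mem_univ i))
  obtain ⟨P, -, hP⟩ := exists_subset_sum_powerset_ge hp₀ hp₁ U
    fun B => ∑ i, if B ∈ 𝓑 i then α i else 0
  refine ⟨P, ?_⟩
  convert hP using 1
  · simp only [sum_mul, ite_mul, zero_mul]
    rw [sum_comm]
    simp only [sum_ite_mem, inter_eq_right.2 (hsub _), mul_sum]
  · rw [sum_comm]
    refine sum_congr rfl fun i _ => ?_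
    rw [sum_ite_mem, sum_const, nsmul_eq_mul, mul_comm]
    congr 3
    ext B
    simp only [mem_filter, mem_inter, mem_powerset, and_comm]

lemma exists_subset_forall_not_subset {𝓠 : Finset (Finset V)} (h𝓠 : ∅ ∉ 𝓠) (P : Finset V) :
    ∃ P' ⊆ P, (∀ B ∈ 𝓠, ¬ B ⊆ P') ∧ #P ≤ #P' + #{B ∈ 𝓠 | B ⊆ P} := by
  cases isEmpty_or_nonempty V
  · exact ⟨P, subset_rfl, fun B hB _ => h𝓠 (B.eq_empty_of_isEmpty ▸ hB), Nat.le_add_right _ _⟩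
  have nonempty : ∀ B ∈ 𝓠, ∃ z, z ∈ B := fun B hB =>
    nonempty_iff_ne_empty.2 fun h => h𝓠 (h ▸ hB)
  choose! f hf using nonempty
  refine ⟨P \ image f {B ∈ 𝓠 | B ⊆ P}, sdiff_subset, fun B hB hBP => ?_, ?_⟩
  · have hmem : B ∈ {B ∈ 𝓠 | B ⊆ P} := mem_filter.2 ⟨hB, hBP.trans sdiff_subset⟩
    exact (mem_sdiff.1 (hBP (hf B hB))).2 (mem_image_of_mem f hmem)
  · have hsdiff := le_card_sdiff (image f {B ∈ 𝓠 | B ⊆ P}) P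
    have himage : #(image f {B ∈ 𝓠 | B ⊆ P}) ≤ _ := card_image_le
    omega

/-- Members of `𝓠` contained in the random subset cost 2 points each, which pays for deleting one
point from each of them and still keeps half of the set. Members of `𝓐` cost `|V|` points, more
than can be gained, so that not one of them is contained in the chosen outcome. -/
lemma exists_forall_not_subset_and_card_ge [Fintype V] {p l : ℝ} (hp₀ : 0 ≤ p) (hp₁ : p ≤ 1)
    (hl : 0 ≤ l) {𝓠 𝓣 𝓐 : Finset (Finset V)} (hμ : 0 < Fintype.card V * p) (hempty : ∅ ∉ 𝓠)
    (h𝓠 : 8 * ∑ B ∈ 𝓠, p ^ #B ≤ Fintype.card V * p)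
    (h𝓣 : 4 * (l * ∑ B ∈ 𝓣, p ^ #B) ≤ Fintype.card V * p)
    (h𝓐 : 4 * (Fintype.card V * ∑ B ∈ 𝓐, p ^ #B) ≤ Fintype.card V * p) :
    ∃ P : Finset V, (∀ B ∈ 𝓠, ¬ B ⊆ P) ∧ (∀ B ∈ 𝓐, ¬ B ⊆ P) ∧
      Fintype.card V * p ≤ 8 * #P ∧ l * #{B ∈ 𝓣 | B ⊆ P} ≤ 2 * #P := by
  obtain ⟨P, hP⟩ := exists_sum_mul_card_filter_subset_ge hp₀ hp₁ ![1, -2, -l, -Fintype.card V]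
    ![univ.map ⟨singleton, singleton_injective⟩, 𝓠, 𝓣, 𝓐]
  have hsingletons : {B ∈ (univ : Finset V).map ⟨singleton, singleton_injective⟩ | B ⊆ P} =
      P.powersetCard 1 := by
    ext B
    simp only [mem_filter, mem_map, mem_univ, true_and, mem_powersetCard, card_eq_one, and_comm,
      Function.Embedding.coeFn_mk, eq_comm]
  simp only [Fin.sum_univ_four, Matrix.cons_val, hsingletons, sum_map, card_powersetCard,
    Function.Embedding.coeFn_mk, card_singleton, pow_one, sum_const, card_univ, nsmul_eq_mul,
    Nat.choose_one_right, one_mul] at hP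
  have hT : 0 ≤ l * #{B ∈ 𝓣 | B ⊆ P} := by positivity
  have hA : #{B ∈ 𝓐 | B ⊆ P} = 0 := by
    by_contra hne
    have hcost : (Fintype.card V : ℝ) ≤ Fintype.card V * #{B ∈ 𝓐 | B ⊆ P} :=
      le_mul_of_one_le_right (by positivity) (by exact_mod_cast Nat.one_le_iff_ne_zero.2 hne)
    have hgain : (#P : ℝ) ≤ Fintype.card V := by exact_mod_cast card_le_univ P
    linarith
  obtain ⟨P', hP'P, hP'Q, hcard⟩ := exists_subset_forall_not_subset hempty P
  have hcard' : (#P : ℝ) ≤ #P' + #{B ∈ 𝓠 | B ⊆ P} := by exact_mod_cast hcard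
  have hmono : l * #{B ∈ 𝓣 | B ⊆ P'} ≤ l * #{B ∈ 𝓣 | B ⊆ P} := by gcongr
  rw [hA, Nat.cast_zero, mul_zero] at hP
  exact ⟨P', hP'Q, fun B hB hBP => filter_eq_empty_iff.1 (card_eq_zero.1 hA) hB (hBP.trans hP'P),
    by linarith, by linarith⟩

end RandomSubsets

section IndependentSets

variable {V : Type*} {G : SimpleGraph V}

open Classical in
/-- The `k`-element subsets of `X` that are independent in `G`. -/
noncomputable def indepSubsets (G : SimpleGraph V) (k : ℕ) (X : Finset V) : Finset (Finset V) :=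
  {I ∈ X.powersetCard k | G.IsIndepSet I}

lemma mem_indepSubsets {k : ℕ} {X I : Finset V} :
    I ∈ indepSubsets G k X ↔ (I ⊆ X ∧ #I = k) ∧ G.IsIndepSet (I : Set V) := by
  classical rw [indepSubsets, mem_filter, mem_powersetCard]

lemma card_indepSubsets_le_pow (k : ℕ) (X : Finset V) : #(indepSubsets G k X) ≤ #X ^ k :=
  calc #(indepSubsets G k X) ≤ #(X.powersetCard k) := by
        classical exact card_filter_le _ _
    _ = (#X).choose k := card_powersetCard _ _
    _ ≤ #X ^ k := Nat.choose_le_pow _ _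

variable [DecidableRel G.Adj]

lemma card_indepSubsets_succ_le [DecidableEq V] (k : ℕ) (v : V) (X : Finset V) :
    #(indepSubsets G (k + 1) X) ≤
      #(indepSubsets G (k + 1) (X.erase v)) +
        #(indepSubsets G k {y ∈ X.erase v | ¬ G.Adj v y}) := by
  have hsub : indepSubsets G (k + 1) X ⊆ indepSubsets G (k + 1) (X.erase v) ∪
      (indepSubsets G k {y ∈ X.erase v | ¬ G.Adj v y}).image (insert v) := by
    intro I hI
    obtain ⟨⟨hIX, hIk⟩, hind⟩ := mem_indepSubsets.1 hI
    by_cases hvI : v ∈ I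
    · refine mem_union_right _ (mem_image.2 ⟨I.erase v, mem_indepSubsets.2 ⟨⟨fun y hy => ?_, ?_⟩,
        hind.mono (coe_subset.2 (erase_subset v I))⟩, insert_erase hvI⟩)
      · obtain ⟨hyv, hyI⟩ := mem_erase.1 hy
        exact mem_filter.2 ⟨mem_erase.2 ⟨hyv, hIX hyI⟩, hind hvI hyI hyv.symm⟩
      · rw [card_erase_of_mem hvI, hIk, Nat.add_sub_cancel]
    · exact mem_union_left _ (mem_indepSubsets.2 ⟨⟨subset_erase.2 ⟨hIX, hvI⟩, hIk⟩, hind⟩)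
  exact (card_le_card hsub).trans ((card_union_le _ _).trans (Nat.add_le_add_left card_image_le _))

lemma card_filter_erase_not_adj_le [DecidableEq V] {β : ℝ} {v : V} {X : Finset V}
    (hv : β * #X ≤ #{y ∈ X | G.Adj v y}) :
    (#{y ∈ X.erase v | ¬ G.Adj v y} : ℝ) ≤ (1 - β) * #X := by
  have hle : #{y ∈ X.erase v | ¬ G.Adj v y} ≤ #{y ∈ X | ¬ G.Adj v y} :=
    card_le_card (filter_subset_filter _ (erase_subset v X))
  have hsplit := card_filter_add_card_filter_not (s := X) (G.Adj v)
  rify at hle hsplit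
  linarith

/-- Kleitman–Winston: an independent set avoids the vertex `v` of large degree, or contains `v` and
avoids its neighbours. The second alternative shrinks `X` by a factor `1 - β`, so it occurs at most
`t` times before at most `R` vertices remain. -/
theorem card_indepSubsets_le_of_exists_degree_ge {β : ℝ} {R : ℕ} (hR : 1 ≤ R) (X : Finset V)
    (hdeg : ∀ Y ⊆ X, R < #Y → ∃ v ∈ Y, β * #Y ≤ #{y ∈ Y | G.Adj v y}) (t k : ℕ)
    (ht : (1 - β) ^ t * #X ≤ R) :
    #(indepSubsets G k X) ≤ (#X + 1) ^ t * R ^ k := by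
  classical
  induction X using Finset.strongInduction generalizing t k with
  | H X ih =>
  rcases le_or_gt #X R with hX | hX
  · exact (card_indepSubsets_le_pow k X).trans ((Nat.pow_le_pow_left hX k).trans
      (Nat.le_mul_of_pos_left _ (by positivity)))
  obtain ⟨v, hvX, hv⟩ := hdeg X subset_rfl hX
  set Y := {y ∈ X.erase v | ¬ G.Adj v y}
  have hYX : Y ⊂ X := (filter_subset _ _).trans_ssubset (erase_ssubset hvX)
  have hY : (#Y : ℝ) ≤ (1 - β) * #X := card_filter_erase_not_adj_le hv
  have hβ : 0 ≤ 1 - β := nonneg_of_mul_nonneg_left ((Nat.cast_nonneg _).trans hY)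
    (by exact_mod_cast (Nat.zero_le R).trans_lt hX)
  rcases t with _ | t
  · rw [pow_zero, one_mul, Nat.cast_le] at ht
    exact absurd ht hX.not_ge
  rcases k with _ | k
  · exact (card_indepSubsets_le_pow 0 X).trans (Nat.succ_le_of_lt (by positivity))
  have havoid : #(indepSubsets G (k + 1) (X.erase v)) ≤ #X ^ (t + 1) * R ^ (k + 1) := by
    have := ih (X.erase v) (erase_ssubset hvX)
      (fun Z hZ => hdeg Z (hZ.trans (erase_subset v X))) (t + 1) (k + 1)
      (le_trans (by gcongr; exact erase_subset v X) ht)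
    rwa [card_erase_add_one hvX] at this
  have hcontain : #(indepSubsets G k Y) ≤ #X ^ t * R ^ (k + 1) := by
    refine (ih Y hYX (fun Z hZ => hdeg Z (hZ.trans hYX.subset)) t k ?_).trans ?_
    · calc (1 - β) ^ t * (#Y : ℝ) ≤ (1 - β) ^ t * ((1 - β) * #X) := by gcongr
        _ = (1 - β) ^ (t + 1) * #X := by ring
        _ ≤ R := ht
    · exact Nat.mul_le_mul (Nat.pow_le_pow_left (card_lt_card hYX) t)
        (Nat.pow_le_pow_right hR k.le_succ)
  calc #(indepSubsets G (k + 1) X)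
      ≤ #X ^ (t + 1) * R ^ (k + 1) + #X ^ t * R ^ (k + 1) :=
        (card_indepSubsets_succ_le k v X).trans (add_le_add havoid hcontain)
    _ = #X ^ t * (#X + 1) * R ^ (k + 1) := by ring
    _ ≤ (#X + 1) ^ t * (#X + 1) * R ^ (k + 1) := by gcongr; exact Nat.le_succ _
    _ = (#X + 1) ^ (t + 1) * R ^ (k + 1) := by ring

end IndependentSets

section Coincidences

variable {ι V D : Type*}

/-- The graph joining distinct points that have the same colour in at least one of the colourings
`f a` with `a ∈ S`. With `f a x` the direction from `a` to `x`, two points of the plane are adjacent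
when they lie on a common line through a point of `S`. -/
def coincidenceGraph (f : ι → V → D) (S : Finset ι) : SimpleGraph V where
  Adj x y := x ≠ y ∧ ∃ a ∈ S, f a x = f a y
  symm := ⟨fun _ _ h => ⟨h.1.symm, h.2.imp fun _ h => ⟨h.1, h.2.symm⟩⟩⟩
  loopless := ⟨fun _ h => h.1 rfl⟩

variable [DecidableEq D]

instance [DecidableEq V] (f : ι → V → D) (S : Finset ι) :
    DecidableRel (coincidenceGraph f S).Adj :=
  fun x y => inferInstanceAs (Decidable (x ≠ y ∧ ∃ a ∈ S, f a x = f a y))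

lemma sq_card_le_card_mul_sum_card_filter_eq [Fintype D] (g : V → D) (X : Finset V) :
    #X ^ 2 ≤ Fintype.card D * ∑ x ∈ X, #{y ∈ X | g x = g y} := by
  have hfibers : ∑ x ∈ X, #{y ∈ X | g x = g y} = ∑ d, #{y ∈ X | g y = d} ^ 2 := by
    rw [← sum_fiberwise X g]
    refine sum_congr rfl fun d _ => ?_
    rw [sq, ← smul_eq_mul, ← sum_const]
    refine sum_congr rfl fun x hx => ?_
    simp only [(mem_filter.1 hx).2, eq_comm]
  calc #X ^ 2 = (∑ d, #{y ∈ X | g y = d}) ^ 2 := by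
        rw [← card_eq_sum_card_fiberwise fun _ _ => mem_coe.2 (mem_univ _)]
    _ ≤ #(univ : Finset D) * ∑ d, #{y ∈ X | g y = d} ^ 2 := sq_sum_le_card_mul_sum_sq
    _ = _ := by rw [card_univ, hfibers]

variable [DecidableEq V]

lemma sq_card_le_two_mul_card_mul_sum_card_filter_ne_eq [Fintype D] (g : V → D) {X : Finset V}
    (hX : 2 * Fintype.card D ≤ #X) :
    #X ^ 2 ≤ 2 * Fintype.card D * ∑ x ∈ X, #{y ∈ X | x ≠ y ∧ g x = g y} := by
  have hdiag : ∑ x ∈ X, #{y ∈ X | g x = g y} = ∑ x ∈ X, #{y ∈ X | x ≠ y ∧ g x = g y} + #X := by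
    rw [card_eq_sum_ones, ← sum_add_distrib]
    refine sum_congr rfl fun x hx => ?_
    rw [← card_insert_of_notMem (a := x) (by simp)]
    congr 1
    ext y
    rcases eq_or_ne x y with rfl | hxy <;> simp_all [eq_comm]
  have hsq := sq_card_le_card_mul_sum_card_filter_eq g X
  rw [hdiag] at hsq
  nlinarith [Nat.mul_le_mul_right #X hX]

lemma sum_card_filter_ne_eq_le_mul_degree {f : ι → V → D} {S : Finset ι} {r : ℕ}
    (hr : ∀ x y, x ≠ y → #{a ∈ S | f a x = f a y} ≤ r) (X : Finset V) (x : V) :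
    ∑ a ∈ S, #{y ∈ X | x ≠ y ∧ f a x = f a y} ≤ r * #{y ∈ X | (coincidenceGraph f S).Adj x y} := by
  have hswap : ∑ a ∈ S, #{y ∈ X | x ≠ y ∧ f a x = f a y} =
      ∑ y ∈ X, #{a ∈ S | x ≠ y ∧ f a x = f a y} :=
    sum_card_bipartiteAbove_eq_sum_card_bipartiteBelow fun a y => x ≠ y ∧ f a x = f a y
  rw [hswap, card_filter, mul_sum]
  refine sum_le_sum fun y _ => ?_
  split_ifs with hadj
  · simpa [hadj.1] using hr x y hadj.1
  · rw [mul_zero, Nat.le_zero, card_eq_zero, filter_eq_empty_iff]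
    exact fun a ha h => hadj ⟨h.1, a, ha, h.2⟩

lemma exists_degree_coincidenceGraph_ge [Fintype D] {f : ι → V → D} {S : Finset ι} {r : ℕ}
    (hr : ∀ x y, x ≠ y → #{a ∈ S | f a x = f a y} ≤ r) {X : Finset V} (hne : X.Nonempty)
    (hX : 2 * Fintype.card D ≤ #X) :
    ∃ v ∈ X, #S * #X ≤ 2 * Fintype.card D * r * #{y ∈ X | (coincidenceGraph f S).Adj v y} := by
  refine exists_le_of_sum_le hne ?_
  calc ∑ _x ∈ X, #S * #X = ∑ _a ∈ S, #X ^ 2 := by simp only [sum_const, smul_eq_mul]; ring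
    _ ≤ ∑ a ∈ S, 2 * Fintype.card D * ∑ x ∈ X, #{y ∈ X | x ≠ y ∧ f a x = f a y} :=
      sum_le_sum fun a _ => sq_card_le_two_mul_card_mul_sum_card_filter_ne_eq (f a) hX
    _ = ∑ x ∈ X, 2 * Fintype.card D * ∑ a ∈ S, #{y ∈ X | x ≠ y ∧ f a x = f a y} := by
      simp only [← mul_sum]
      rw [sum_comm]
    _ ≤ ∑ x ∈ X, 2 * Fintype.card D * r * #{y ∈ X | (coincidenceGraph f S).Adj x y} := by
      refine sum_le_sum fun x _ => ?_
      rw [mul_assoc _ r]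
      gcongr
      exact sum_card_filter_ne_eq_le_mul_degree hr X x

end Coincidences

section CollinearSets

variable {K V : Type*} [Field K] [AddCommGroup V] [Module K V]

variable (K V) in
open Classical in
/-- The collinear `k`-element subsets of a finite `K`-vector space `V`. -/
noncomputable def collinearSets [Fintype V] (k : ℕ) : Finset (Finset V) :=
  {B ∈ univ.powersetCard k | Collinear K (B : Set V)}

lemma mem_collinearSets [Fintype V] {k : ℕ} {B : Finset V} :
    B ∈ collinearSets K V k ↔ #B = k ∧ Collinear K (B : Set V) := by
  classical rw [collinearSets, mem_filter, mem_powersetCard_univ]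

lemma sized_collinearSets [Fintype V] (k : ℕ) :
    (collinearSets K V k : Set (Finset V)).Sized k :=
  fun _ hB => (mem_collinearSets.1 hB).1

lemma exists_image_lineMap_eq_of_collinear [DecidableEq K] [DecidableEq V] {k : ℕ}
    {B : Finset V} (hB : Collinear K (B : Set V)) (hk : #B = k + 2) :
    ∃ a b : V, ∃ T : Finset K, #T = k ∧
      (insert 0 (insert 1 T)).image (AffineMap.lineMap a b) = B := by
  obtain ⟨a, ha, b, hb, hab⟩ := one_lt_card.1 (by omega : 1 < #B)
  have hinj := AffineMap.lineMap_injective K hab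
  set T : Finset K := B.preimage (AffineMap.lineMap a b) hinj.injOn
  have himage : T.image (AffineMap.lineMap a b) = B := by
    classical
    rw [image_preimage, filter_eq_self]
    exact fun c hc => mem_affineSpan_pair_iff_exists_lineMap_eq.1
      (hB.mem_affineSpan_of_mem_of_ne ha hb hc hab)
  have hcard : #T = k + 2 := by rw [← card_image_of_injective T hinj, himage, hk]
  have h0 : (0 : K) ∈ T := by simpa [T] using ha
  have h1 : (1 : K) ∈ T.erase 0 := by simpa [T] using hb
  refine ⟨a, b, (T.erase 0).erase 1, ?_, ?_⟩
  · rw [card_erase_of_mem h1, card_erase_of_mem h0, hcard]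
    rfl
  · rw [insert_erase h1, insert_erase h0, himage]

lemma card_collinearSets_add_two_le [Fintype K] [Fintype V] (k : ℕ) :
    #(collinearSets K V (k + 2)) ≤ Fintype.card V ^ 2 * Fintype.card K ^ k := by
  classical
  have hsub : collinearSets K V (k + 2) ⊆
      (univ ×ˢ univ ×ˢ univ.powersetCard k : Finset (V × V × Finset K)).image
        fun z => (insert 0 (insert 1 z.2.2)).image (AffineMap.lineMap z.1 z.2.1) := by
    intro B hB
    obtain ⟨hk, hcol⟩ := mem_collinearSets.1 hB
    obtain ⟨a, b, T, hT, himage⟩ := exists_image_lineMap_eq_of_collinear hcol hk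
    exact mem_image.2 ⟨(a, b, T), by simp [hT], himage⟩
  calc #(collinearSets K V (k + 2))
      ≤ #(univ ×ˢ univ ×ˢ univ.powersetCard k : Finset (V × V × Finset K)) :=
        (card_le_card hsub).trans card_image_le
    _ = Fintype.card V ^ 2 * (Fintype.card K).choose k := by
      rw [card_product, card_product, card_powersetCard, card_univ, card_univ, sq, mul_assoc]
    _ ≤ Fintype.card V ^ 2 * Fintype.card K ^ k := by gcongr; exact Nat.choose_le_pow _ _

variable {F : Type*} [Field F] [Fintype F]

lemma noLCollinear_iff_forall_not_subset {l : ℕ} {P : Finset (F × F)} :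
    NoLCollinear F l P ↔ ∀ B ∈ collinearSets F (F × F) l, ¬ B ⊆ P :=
  ⟨fun h B hB hBP => h B hBP (mem_collinearSets.1 hB).1 (mem_collinearSets.1 hB).2,
    fun h B hBP hl hcol => h B (mem_collinearSets.2 ⟨hl, hcol⟩) hBP⟩

lemma numCollinearTriples_eq_card_filter [DecidableEq F] (P : Finset (F × F)) :
    numCollinearTriples F P = #{B ∈ collinearSets F (F × F) 3 | B ⊆ P} :=
  Nat.subtype_card _ fun B => by rw [mem_filter, mem_collinearSets, and_comm]

end CollinearSets

section Arcs

variable {F : Type*} [Field F]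

lemma IsArc.mono {P Q : Set (F × F)} (hQ : IsArc F Q) (hPQ : P ⊆ Q) : IsArc F P :=
  fun a ha b hb c hc => hQ a (hPQ ha) b (hPQ hb) c (hPQ hc)

lemma maxArc_le_of_forall_not_isArc {P : Finset (F × F)} {m : ℕ}
    (h : ∀ A ⊆ P, #A = m → ¬ IsArc F (A : Set (F × F))) : maxArc F P ≤ m := by
  refine csSup_le' ?_
  rintro _ ⟨A, hAP, rfl, hA⟩
  by_contra! hlt
  obtain ⟨B, hBA, hB⟩ := exists_subset_card_eq hlt.le
  exact h B (hBA.trans hAP) hB (hA.mono (coe_subset.2 hBA))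

variable [DecidableEq F]

/-- The slope of the line through `a` and `x`, with `none` for the vertical direction. The
degenerate value `direction a a` is `none`. -/
def direction (a x : F × F) : Option F :=
  if x.1 = a.1 then none else some ((x.2 - a.2) / (x.1 - a.1))

lemma exists_forall_direction_eq_imp (a : F × F) (d : Option F) :
    ∃ v : F × F, ∀ x, direction a x = d → ∃ r : F, x = r • v + a := by
  rcases d with _ | m
  · refine ⟨(0, 1), fun x hx => ⟨x.2 - a.2, ?_⟩⟩
    have hfst : x.1 = a.1 := by simpa [direction] using hx
    ext <;> simp [hfst]
  · refine ⟨(1, m), fun x hx => ⟨x.1 - a.1, ?_⟩⟩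
    obtain ⟨hfst, rfl⟩ : x.1 ≠ a.1 ∧ (x.2 - a.2) / (x.1 - a.1) = m := by
      simpa [direction, ite_eq_iff] using hx
    ext <;> simp [mul_div_cancel₀ _ (sub_ne_zero.2 hfst)]

lemma collinear_of_direction_eq {a x y : F × F} (h : direction a x = direction a y) :
    Collinear F {a, x, y} := by
  obtain ⟨v, hv⟩ := exists_forall_direction_eq_imp a (direction a y)
  refine (collinear_iff_of_mem (p₀ := a) (by simp)).2 ⟨v, ?_⟩
  rintro p (rfl | rfl | rfl)
  exacts [⟨0, by simp⟩, hv p h, hv p rfl]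

/-- Each such point lies on the line through `x` and `y`. -/
lemma IsArc.card_filter_direction_eq_le_two {S : Finset (F × F)} (hS : IsArc F (S : Set (F × F)))
    {x y : F × F} (hxy : x ≠ y) : #{a ∈ S | direction a x = direction a y} ≤ 2 := by
  by_contra! h
  obtain ⟨a, b, c, ha, hb, hc, hab, hac, hbc⟩ := two_lt_card_iff.1 h
  have mem_line : ∀ d ∈ {a ∈ S | direction a x = direction a y}, d ∈ line[F, x, y] := fun d hd =>
    (collinear_of_direction_eq (mem_filter.1 hd).2).mem_affineSpan_of_mem_of_ne
      (by simp) (by simp) (by simp) hxy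
  exact hS a (mem_filter.1 ha).1 b (mem_filter.1 hb).1 c (mem_filter.1 hc).1 hab hac hbc
    (collinear_triple_of_mem_affineSpan_pair (mem_line a ha) (mem_line b hb) (mem_line c hc))

lemma IsArc.isIndepSet_sdiff {A S : Finset (F × F)} (hA : IsArc F (A : Set (F × F)))
    (hSA : S ⊆ A) :
    (coincidenceGraph direction S).IsIndepSet ((A \ S : Finset (F × F)) : Set (F × F)) := by
  rintro x hx y hy hxy ⟨-, a, ha, h⟩
  obtain ⟨hxA, hxS⟩ := mem_sdiff.1 (mem_coe.1 hx)
  obtain ⟨hyA, hyS⟩ := mem_sdiff.1 (mem_coe.1 hy)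
  exact hA a (hSA ha) x hxA y hyA (ne_of_mem_of_not_mem ha hxS) (ne_of_mem_of_not_mem ha hyS) hxy
    (collinear_of_direction_eq h)

end Arcs

section CountingArcs

variable {F : Type*} [Field F] [Fintype F]

variable (F) in
open Classical in
/-- The `k`-element arcs of `F²`, as a finset; `numArcs F k` is its cardinality. -/
noncomputable def arcSets (k : ℕ) : Finset (Finset (F × F)) :=
  {A ∈ univ.powersetCard k | IsArc F (A : Set (F × F))}

lemma mem_arcSets {k : ℕ} {A : Finset (F × F)} :
    A ∈ arcSets F k ↔ #A = k ∧ IsArc F (A : Set (F × F)) := by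
  classical rw [arcSets, mem_filter, mem_powersetCard_univ]

lemma sized_arcSets (k : ℕ) : (arcSets F k : Set (Finset (F × F))).Sized k :=
  fun _ hA => (mem_arcSets.1 hA).1

lemma maxArc_le_of_forall_not_subset {P : Finset (F × F)} {m : ℕ}
    (h : ∀ A ∈ arcSets F m, ¬ A ⊆ P) : maxArc F P ≤ m :=
  maxArc_le_of_forall_not_isArc fun A hAP hA harc => h A (mem_arcSets.2 ⟨hA, harc⟩) hAP

lemma card_arcSets_le_pow (k : ℕ) : #(arcSets F k) ≤ (Fintype.card F ^ 2) ^ k :=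
  calc #(arcSets F k) ≤ #((univ : Finset (F × F)).powersetCard k) := by
        classical exact card_filter_le _ _
    _ = (Fintype.card F ^ 2).choose k := by
      rw [card_powersetCard, card_univ, Fintype.card_prod, sq]
    _ ≤ (Fintype.card F ^ 2) ^ k := Nat.choose_le_pow _ _

variable [DecidableEq F]

lemma card_arcSets_add_le_sum (s k : ℕ) :
    #(arcSets F (s + k)) ≤
      ∑ S ∈ arcSets F s, #(indepSubsets (coincidenceGraph direction S) k univ) := by
  have hsub : arcSets F (s + k) ⊆ (arcSets F s).biUnion fun S =>
      (indepSubsets (coincidenceGraph direction S) k univ).image (S ∪ ·) := by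
    intro A hA
    obtain ⟨hcard, harc⟩ := mem_arcSets.1 hA
    obtain ⟨S, hSA, hS⟩ := exists_subset_card_eq (hcard ▸ Nat.le_add_right s k : s ≤ #A)
    refine mem_biUnion.2 ⟨S, mem_arcSets.2 ⟨hS, harc.mono (coe_subset.2 hSA)⟩,
      mem_image.2 ⟨A \ S, mem_indepSubsets.2 ⟨⟨subset_univ _, ?_⟩, harc.isIndepSet_sdiff hSA⟩,
        union_sdiff_of_subset hSA⟩⟩
    rw [card_sdiff_of_subset hSA, hcard, hS, Nat.add_sub_cancel_left]
  exact (card_le_card hsub).trans (card_biUnion_le.trans (sum_le_sum fun S _ => card_image_le))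

lemma IsArc.card_indepSubsets_coincidenceGraph_le {S : Finset (F × F)}
    (hS : IsArc F (S : Set (F × F))) {t : ℕ}
    (ht : (1 - (#S : ℝ) / (4 * (Fintype.card F + 1))) ^ t * (Fintype.card F : ℝ) ^ 2 ≤
      2 * (Fintype.card F + 1)) (k : ℕ) :
    #(indepSubsets (coincidenceGraph direction S) k univ) ≤
      (Fintype.card F ^ 2 + 1) ^ t * (2 * (Fintype.card F + 1)) ^ k := by
  have hdeg : ∀ Y ⊆ (univ : Finset (F × F)), 2 * (Fintype.card F + 1) < #Y → ∃ v ∈ Y,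
      (#S : ℝ) / (4 * (Fintype.card F + 1)) * #Y ≤
        #{y ∈ Y | (coincidenceGraph direction S).Adj v y} := by
    intro Y _ hY
    obtain ⟨v, hv, hle⟩ := exists_degree_coincidenceGraph_ge
      (fun x y hxy => hS.card_filter_direction_eq_le_two hxy)
      (card_pos.1 (Nat.zero_lt_of_lt hY)) (by rw [Fintype.card_option]; exact hY.le)
    refine ⟨v, hv, ?_⟩
    rw [Fintype.card_option] at hle
    rify at hle
    rw [div_mul_eq_mul_div, div_le_iff₀ (by positivity)]
    linarith
  have hcard : #(univ : Finset (F × F)) = Fintype.card F ^ 2 := by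
    rw [card_univ, Fintype.card_prod, sq]
  rw [← hcard]
  refine card_indepSubsets_le_of_exists_degree_ge (by omega) univ hdeg t k ?_
  rw [hcard]
  exact_mod_cast ht

omit [DecidableEq F] in
lemma card_arcSets_add_le {s t : ℕ}
    (ht : (1 - (s : ℝ) / (4 * (Fintype.card F + 1))) ^ t * (Fintype.card F : ℝ) ^ 2 ≤
      2 * (Fintype.card F + 1)) (k : ℕ) :
    #(arcSets F (s + k)) ≤
      (Fintype.card F ^ 2 + 1) ^ (s + t) * (2 * (Fintype.card F + 1)) ^ k := by
  classical
  set q := Fintype.card F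
  calc #(arcSets F (s + k))
      ≤ ∑ S ∈ arcSets F s, #(indepSubsets (coincidenceGraph direction S) k univ) :=
        card_arcSets_add_le_sum s k
    _ ≤ #(arcSets F s) * ((q ^ 2 + 1) ^ t * (2 * (q + 1)) ^ k) :=
        sum_le_card_nsmul _ _ _ fun S hS =>
          have ⟨hcard, harc⟩ := mem_arcSets.1 hS
          harc.card_indepSubsets_coincidenceGraph_le (hcard ▸ ht) k
    _ ≤ (q ^ 2 + 1) ^ s * ((q ^ 2 + 1) ^ t * (2 * (q + 1)) ^ k) := by
      gcongr
      exact (card_arcSets_le_pow s).trans (Nat.pow_le_pow_left (Nat.le_succ _) s)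
    _ = (q ^ 2 + 1) ^ (s + t) * (2 * (q + 1)) ^ k := by ring

end CountingArcs

section Estimates

lemma one_sub_div_pow_le_inv {n y : ℝ} {s : ℕ} (hn : 0 < n) (hsn : s ≤ n) (hy : 0 < y)
    (h : n * Real.log y ≤ (s : ℝ) ^ 2) : (1 - s / n) ^ s ≤ y⁻¹ :=
  calc (1 - s / n) ^ s ≤ Real.exp (-(s / n)) ^ s := by
        gcongr
        · exact sub_nonneg.2 ((div_le_one hn).2 hsn)
        · exact Real.one_sub_le_exp_neg _
    _ = Real.exp (-((s : ℝ) ^ 2 / n)) := by rw [← Real.exp_nat_mul]; ring_nf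
    _ ≤ Real.exp (-Real.log y) := by gcongr; rwa [le_div_iff₀' hn]
    _ = y⁻¹ := by rw [Real.exp_neg, Real.exp_log hy]

lemma two_le_log {y : ℝ} (hy : 8 ≤ y) : 2 ≤ Real.log y := by
  rw [Real.le_log_iff_exp_le (by linarith), ← one_add_one_eq_two, Real.exp_add]
  nlinarith [Real.exp_one_lt_d9, Real.exp_pos 1]

lemma exists_nat_ge_two_mul_sqrt_mul_log {y : ℝ} (hy : 8 ≤ y) :
    ∃ s : ℕ, 2 * (√y * Real.log y) ≤ s ∧ (s : ℝ) ≤ 3 * (√y * Real.log y) ∧ s ≤ 4 * (y + 1) := by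
  have hy₀ : 0 < y := by linarith
  have hsq : √y * √y = y := Real.mul_self_sqrt hy₀.le
  have hlog := two_le_log hy
  have hlog' : Real.log y ≤ 2 * √y := by
    have := Real.log_sqrt hy₀.le ▸ Real.log_le_self (Real.sqrt_nonneg y)
    linarith
  have hone : 1 ≤ √y * Real.log y :=
    one_le_mul_of_one_le_of_one_le (Real.one_le_sqrt.2 (by linarith)) (by linarith)
  have hceil := Nat.ceil_lt_add_one (by linarith : 0 ≤ 2 * (√y * Real.log y))
  have hmul := mul_le_mul_of_nonneg_left hlog' (Real.sqrt_nonneg y)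
  exact ⟨⌈2 * (√y * Real.log y)⌉₊, Nat.le_ceil _, by linarith, by linarith⟩

lemma one_sub_div_pow_mul_sq_le {y : ℝ} {s : ℕ} (hy : 8 ≤ y)
    (hs : 2 * (√y * Real.log y) ≤ s) (hs' : (s : ℝ) ≤ 4 * (y + 1)) :
    (1 - (s : ℝ) / (4 * (y + 1))) ^ s * y ^ 2 ≤ 2 * (y + 1) := by
  have hy₀ : 0 < y := by linarith
  have hlog := two_le_log hy
  have hsq : 4 * (y + 1) * Real.log y ≤ (s : ℝ) ^ 2 :=
    calc 4 * (y + 1) * Real.log y ≤ 4 * (y * Real.log y) * Real.log y := by gcongr; nlinarith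
      _ = (2 * (√y * Real.log y)) ^ 2 := by rw [mul_pow, mul_pow, Real.sq_sqrt hy₀.le]; ring
      _ ≤ (s : ℝ) ^ 2 := by gcongr
  calc (1 - (s : ℝ) / (4 * (y + 1))) ^ s * y ^ 2 ≤ y⁻¹ * y ^ 2 := by
        gcongr
        exact one_sub_div_pow_le_inv (by linarith) hs' hy₀ hsq
    _ = y := by field_simp
    _ ≤ 2 * (y + 1) := by linarith

lemma exists_four_le_and_pow_three_eq {y : ℝ} (hy : 64 ≤ y) :
    ∃ x : ℝ, 4 ≤ x ∧ x ^ 3 = y ∧ y ^ ((2 : ℝ) / 3) = x ^ 2 := by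
  have hy₀ : 0 ≤ y := by linarith
  refine ⟨y ^ ((1 : ℝ) / 3), ?_, ?_, ?_⟩
  · calc (4 : ℝ) = ((4 : ℝ) ^ (3 : ℝ)) ^ ((1 : ℝ) / 3) := by
          rw [← Real.rpow_mul (by norm_num)]; norm_num
      _ ≤ y ^ ((1 : ℝ) / 3) := by gcongr; norm_num [hy]
  all_goals rw [← Real.rpow_natCast, ← Real.rpow_mul hy₀]; norm_num

lemma one_div_two_mul_pow_four_le_one {x : ℝ} (hx : 1 ≤ x) : 1 / (2 * x ^ 4) ≤ 1 := by
  rw [div_le_one (by positivity)]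
  linarith [one_le_pow₀ hx (n := 4)]

/-- For `q = x ^ 3` and `p = 1 / (2 * x ^ 4)`, the second factor bounds the expected number of arcs
of size `49 * s` in a `p`-random subset of the plane. The factors depending on `q ^ 2` are at most
`x ^ (24 * s)`, which the gain `(2 / x) ^ (48 * s)` more than absorbs. -/
lemma sq_mul_arc_weight_le_one {x : ℝ} (hx : 4 ≤ x) {s : ℕ} (hs : 1 ≤ s) :
    (x ^ 3) ^ 2 * ((((x ^ 3) ^ 2 + 1) ^ (s + s) * (2 * (x ^ 3 + 1)) ^ (48 * s)) *
      (1 / (2 * x ^ 4)) ^ (s + 48 * s)) ≤ 1 := by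
  have hx₀ : 0 < x := by linarith
  have hx₁ : 1 ≤ x ^ 3 := one_le_pow₀ (by linarith)
  have hbase : (x ^ 3) ^ 2 + 1 ≤ x ^ 9 := by nlinarith [pow_le_pow_left₀ (by norm_num) hx 3]
  have hfactor : 2 * (x ^ 3 + 1) * (1 / (2 * x ^ 4)) ≤ 2 / x := by
    rw [mul_one_div, div_le_div_iff₀ (by positivity) hx₀]
    nlinarith
  have hp := one_div_two_mul_pow_four_le_one (by linarith : 1 ≤ x)
  calc _ = (x ^ 3) ^ 2 * (((x ^ 3) ^ 2 + 1) ^ 2 * (2 * (x ^ 3 + 1) * (1 / (2 * x ^ 4))) ^ 48 *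
          (1 / (2 * x ^ 4))) ^ s := by rw [← two_mul]; simp only [mul_pow, pow_add, pow_mul]; ring
    _ ≤ ((x ^ 3) ^ 2) ^ s * ((x ^ 9) ^ 2 * (2 / x) ^ 48 * 1) ^ s := by
      gcongr
      exact le_self_pow₀ (one_le_pow₀ hx₁) (by omega)
    _ = ((4 / x) ^ 24) ^ s := by rw [← mul_pow]; congr 1; field_simp; norm_num
    _ ≤ 1 := pow_le_one₀ (by positivity) (pow_le_one₀ (by positivity) ((div_le_one hx₀).2 hx))

lemma eventually_mul_sqrt_mul_log_le {δ κ : ℝ} (hδ : 0 < δ) (hκ : 0 < κ) (a : ℝ) :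
    ∀ᶠ y : ℝ in Filter.atTop,
      a * (√y * Real.log y) ≤ (κ * y ^ ((2 : ℝ) / 3)) ^ ((3 : ℝ) / 4 + δ) := by
  have hlittle : (fun y => a * Real.log y) =o[Filter.atTop] fun y : ℝ => y ^ (2 * δ / 3) :=
    (isLittleO_log_rpow_atTop (by positivity)).const_mul_left a
  filter_upwards [hlittle.bound (by positivity : 0 < κ ^ ((3 : ℝ) / 4 + δ)),
    Filter.eventually_gt_atTop 0] with y hbound hy
  rw [Real.norm_of_nonneg (by positivity : 0 ≤ y ^ (2 * δ / 3))] at hbound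
  calc a * (√y * Real.log y) = √y * (a * Real.log y) := by ring
    _ ≤ √y * (κ ^ ((3 : ℝ) / 4 + δ) * y ^ (2 * δ / 3)) := by
      gcongr ?_ * ?_
      exact (Real.le_norm_self _).trans hbound
    _ = κ ^ ((3 : ℝ) / 4 + δ) * (y ^ ((1 : ℝ) / 2) * y ^ (2 * δ / 3)) := by
      rw [Real.sqrt_eq_rpow]; ring
    _ = (κ * y ^ ((2 : ℝ) / 3)) ^ ((3 : ℝ) / 4 + δ) := by
      rw [Real.mul_rpow hκ.le (by positivity), ← Real.rpow_mul hy.le, ← Real.rpow_add hy]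
      ring_nf

end Estimates

section Construction

lemma sum_pow_card_of_sized {V : Type*} {𝓑 : Finset (Finset V)} {k : ℕ}
    (h : (𝓑 : Set (Finset V)).Sized k) (p : ℝ) : ∑ B ∈ 𝓑, p ^ #B = #𝓑 * p ^ k := by
  rw [sum_congr rfl fun B hB => by rw [h hB], sum_const, nsmul_eq_mul]

variable {F : Type*} [Field F] [Fintype F]

lemma sum_collinearSets_pow_card_le {p : ℝ} (hp : 0 ≤ p) (k : ℕ) :
    ∑ B ∈ collinearSets F (F × F) (k + 2), p ^ #B ≤
      (Fintype.card F : ℝ) ^ (k + 4) * p ^ (k + 2) := by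
  have hcard : (#(collinearSets F (F × F) (k + 2)) : ℝ) ≤ Fintype.card F ^ (k + 4) := by
    have := card_collinearSets_add_two_le (K := F) (V := F × F) k
    rw [Fintype.card_prod, ← sq, ← pow_mul, ← pow_add, add_comm (2 * 2)] at this
    exact_mod_cast this
  rw [sum_pow_card_of_sized (sized_collinearSets _)]
  gcongr

lemma sum_arcSets_pow_card_le {x : ℝ} (hx : 4 ≤ x) (hxq : x ^ 3 = Fintype.card F) {s : ℕ}
    (hs : 1 ≤ s)
    (ht : (1 - (s : ℝ) / (4 * (Fintype.card F + 1))) ^ s * (Fintype.card F : ℝ) ^ 2 ≤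
      2 * (Fintype.card F + 1)) :
    (Fintype.card F : ℝ) ^ 2 * ∑ A ∈ arcSets F (s + 48 * s), (1 / (2 * x ^ 4)) ^ #A ≤ 1 := by
  have hcard : (#(arcSets F (s + 48 * s)) : ℝ) ≤
      ((x ^ 3) ^ 2 + 1) ^ (s + s) * (2 * (x ^ 3 + 1)) ^ (48 * s) := by
    rw [hxq]
    exact_mod_cast card_arcSets_add_le ht (48 * s)
  rw [sum_pow_card_of_sized (sized_arcSets _), ← hxq]
  refine le_trans ?_ (sq_mul_arc_weight_le_one hx hs)
  gcongr

lemma exists_noLCollinear_four_and_maxArc_le_of_sum_arcSets_le {x : ℝ} (hx : 4 ≤ x)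
    (hxq : x ^ 3 = Fintype.card F) {m : ℕ}
    (hm : (Fintype.card F : ℝ) ^ 2 * ∑ A ∈ arcSets F m, (1 / (2 * x ^ 4)) ^ #A ≤ 1) :
    ∃ P : Finset (F × F), x ^ 2 ≤ 16 * #P ∧ NoLCollinear F 4 P ∧ maxArc F P ≤ m ∧
      (numCollinearTriples F P : ℝ) ≤ 2 * x * #P := by
  classical
  have hx₀ : 0 < x := by linarith
  have hp₀ : 0 ≤ 1 / (2 * x ^ 4) := by positivity
  have hcard : (Fintype.card (F × F) : ℝ) = (Fintype.card F : ℝ) ^ 2 := by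
    rw [Fintype.card_prod, Nat.cast_mul, sq]
  have hmean : (Fintype.card (F × F) : ℝ) * (1 / (2 * x ^ 4)) = x ^ 2 / 2 := by
    rw [hcard, ← hxq]; field_simp
  obtain ⟨P, h𝓠, h𝓐, hsize, hT⟩ := exists_forall_not_subset_and_card_ge hp₀
    (one_div_two_mul_pow_four_le_one (by linarith)) (by positivity : 0 ≤ 1 / x)
    (𝓠 := collinearSets F (F × F) 4) (𝓣 := collinearSets F (F × F) 3) (𝓐 := arcSets F m)
    (by rw [hmean]; positivity) (fun h => by simpa using sized_collinearSets 4 h)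
    (calc _ ≤ 8 * ((Fintype.card F : ℝ) ^ 6 * (1 / (2 * x ^ 4)) ^ 4) := by
            gcongr; exact sum_collinearSets_pow_card_le hp₀ 2
      _ = _ := by rw [hmean, ← hxq]; field_simp; norm_num)
    (calc _ ≤ 4 * (1 / x * ((Fintype.card F : ℝ) ^ 5 * (1 / (2 * x ^ 4)) ^ 3)) := by
            gcongr; exact sum_collinearSets_pow_card_le hp₀ 1
      _ = _ := by rw [hmean, ← hxq]; field_simp; norm_num)
    (by rw [hmean, hcard]; nlinarith)
  rw [hmean] at hsize
  rw [one_div_mul_eq_div, div_le_iff₀ hx₀] at hT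
  refine ⟨P, by linarith, noLCollinear_iff_forall_not_subset.2 h𝓠,
    maxArc_le_of_forall_not_subset h𝓐, ?_⟩
  rw [numCollinearTriples_eq_card_filter]
  linarith

theorem exists_noLCollinear_four_and_maxArc_le_sqrt_mul_log (hq : 64 ≤ Fintype.card F) :
    ∃ P : Finset (F × F), 1 / 16 * (Fintype.card F : ℝ) ^ ((2 : ℝ) / 3) ≤ #P ∧
      NoLCollinear F 4 P ∧
      (maxArc F P : ℝ) ≤ 147 * (√(Fintype.card F) * Real.log (Fintype.card F)) ∧
      (numCollinearTriples F P : ℝ) ≤ 8 * (#P : ℝ) ^ ((3 : ℝ) / 2) := by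
  have hq₆₄ : (64 : ℝ) ≤ Fintype.card F := by exact_mod_cast hq
  have hq₈ : (8 : ℝ) ≤ Fintype.card F := by linarith
  obtain ⟨x, hx, hxq, hx2⟩ := exists_four_le_and_pow_three_eq hq₆₄
  obtain ⟨s, hs, hs', hs_le⟩ := exists_nat_ge_two_mul_sqrt_mul_log hq₈
  have hs₁ : 1 ≤ s := by
    have hpos : 0 < √(Fintype.card F : ℝ) * Real.log (Fintype.card F) :=
      mul_pos (Real.sqrt_pos.2 (by linarith)) (by linarith [two_le_log hq₈])
    exact_mod_cast (by linarith : (0 : ℝ) < s)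
  obtain ⟨P, hsize, hfour, harc, htriples⟩ :=
    exists_noLCollinear_four_and_maxArc_le_of_sum_arcSets_le hx hxq
      (sum_arcSets_pow_card_le hx hxq hs₁ (one_sub_div_pow_mul_sq_le hq₈ hs hs_le))
  refine ⟨P, by linarith, hfour, ?_, htriples.trans ?_⟩
  · rify at harc
    linarith
  · have hxP : x ≤ 4 * √(#P : ℝ) := by
      linarith [Real.le_sqrt_of_sq_le (by linarith : (x / 4) ^ 2 ≤ (#P : ℝ))]
    calc 2 * x * #P ≤ 2 * (4 * √(#P : ℝ)) * #P := by gcongr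
      _ = 8 * (#P : ℝ) ^ ((3 : ℝ) / 2) := by
        rw [(by norm_num : (3 : ℝ) / 2 = 1 / 2 + 1), Real.rpow_add_one' (by positivity)
          (by norm_num), Real.sqrt_eq_rpow]
        ring

end Construction

theorem balogh_solymosi_analogue_strong :
    ∀ δ : ℝ, 0 < δ → ∃ c C : ℝ, 0 < c ∧ 0 < C ∧ ∃ q₀ : ℕ,
      ∀ (F : Type) [Field F] [Fintype F], q₀ ≤ Fintype.card F →
      ∃ P : Finset (F × F),
        c * (Fintype.card F : ℝ) ^ ((2 : ℝ) / 3) ≤ (P.card : ℝ) ∧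
        NoLCollinear F 4 P ∧
        (maxArc F P : ℝ) ≤ (P.card : ℝ) ^ ((3 : ℝ) / 4 + δ) ∧
        (numCollinearTriples F P : ℝ) ≤ C * (P.card : ℝ) ^ ((3 : ℝ) / 2) := by
  intro δ hδ
  obtain ⟨q₁, hq₁⟩ := Filter.eventually_atTop.1 <| tendsto_natCast_atTop_atTop.eventually <|
    eventually_mul_sqrt_mul_log_le hδ (by norm_num : (0 : ℝ) < 1 / 16) 147
  refine ⟨1 / 16, 8, by norm_num, by norm_num, max q₁ 64, fun F _ _ hF => ?_⟩
  obtain ⟨P, hsize, hfour, harc, htriples⟩ :=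
    exists_noLCollinear_four_and_maxArc_le_sqrt_mul_log (F := F) ((le_max_right _ _).trans hF)
  refine ⟨P, hsize, hfour, ?_, htriples⟩
  calc (maxArc F P : ℝ) ≤ 147 * (√(Fintype.card F) * Real.log (Fintype.card F)) := harc
    _ ≤ (1 / 16 * (Fintype.card F : ℝ) ^ ((2 : ℝ) / 3)) ^ ((3 : ℝ) / 4 + δ) :=
      hq₁ _ ((le_max_left _ _).trans hF)
    _ ≤ (#P : ℝ) ^ ((3 : ℝ) / 4 + δ) := by gcongr
end
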